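/- Let M ⊆ GL₂(ℤ/ℓℤ) be a solvable subgroup for a prime ℓ. Then the fourth iterated commutator subgroup M^(4) is trivial, where M^(0) = M and M^(n) = [M^(n-1), M^(n-1)]. -/

import Mathlib

open Matrix

/-!
A matrix commuting with a nonscalar `a ∈ M₂(F)` has the form `r + sa`, so the centralizer of `a`
in `GL₂(F)` is commutative. If conjugation by `g` and by `k` both send `a` to such affine
expressions, comparing traces and determinants shows that these two conjugations commute on `a`,
that is, `⁅g, k⁆` commutes with `a`. Hence a group `G ≤ GL₂(F)` with a commutative normal subgroup
containing a nonscalar matrix has `G⁽²⁾ = 1`.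

Otherwise let `⁅B, B⁆` be the last nontrivial term of the derived series, where `B` is the term
before it. It consists of scalar matrices of determinant one, so its order is at most two. Two
noncommuting elements of `B` have centralizers of index at most two in `B`, and only scalar matrices
commute with both, so the image `V` of `B` in `G` modulo its center has order at most four. Since
`Aut V` permutes the at most three nonidentity elements of `V`, it is killed by two commutator
steps. Thus `⁅G⁽²⁾, B⁆` is central, the three subgroups lemma gives `⁅G⁽³⁾, B⁆ = 1`, and `G⁽³⁾` is
central.
-/

section DerivedSeries

open Subgroup
open scoped commutatorElement

variable {G H : Type*} [Group G] [Group H]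

theorem derivedSeries_eq_bot_of_injective {f : G →* H} (hf : Function.Injective f) {n : ℕ}
    (h : derivedSeries H n = ⊥) : derivedSeries G n = ⊥ :=
  ((derivedSeries G n).map_eq_bot_iff_of_injective hf).mp
    (le_bot_iff.mp (h ▸ map_derivedSeries_le_derivedSeries f n))

theorem derivedSeries_succ_eq_bot_of_le {K : Subgroup G} [IsMulCommutative K] {n : ℕ}
    (h : derivedSeries G n ≤ K) : derivedSeries G (n + 1) = ⊥ := by
  rw [derivedSeries_succ, ← le_bot_iff, ← commutator_self_eq_bot_iff.mpr ‹IsMulCommutative K›]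
  exact commutator_mono h h

theorem exists_derivedSeries_ne_bot_and_succ_eq_bot [Group.IsSolvable G] {k : ℕ}
    (hk : derivedSeries G k ≠ ⊥) :
    ∃ n ≥ k, derivedSeries G n ≠ ⊥ ∧ derivedSeries G (n + 1) = ⊥ := by
  obtain ⟨m, hm⟩ := Group.IsSolvable.solvable (G := G)
  by_contra! h
  have ne_bot : ∀ n ≥ k, derivedSeries G n ≠ ⊥ := Nat.le_induction hk h
  exact ne_bot (max k m) (le_max_left k m)
    (le_bot_iff.mp (hm ▸ derivedSeries_antitone G (le_max_right k m)))

theorem derivedSeries_perm_two_eq_bot {α : Type*} [Finite α] (hα : Nat.card α ≤ 3) :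
    derivedSeries (Equiv.Perm α) 2 = ⊥ := by
  classical
  cases nonempty_fintype α
  have := alternatingGroup.isMulCommutative_of_card_le_three hα
  refine derivedSeries_succ_eq_bot_of_le (K := alternatingGroup α) ?_
  exact (derivedSeries_one _).trans_le alternatingGroup.commutator_perm_le

/-- The permutation action of the automorphisms of `V` on the nonidentity elements of `V`, which
embeds `MulAut V` into a symmetric group on one letter fewer than `V` has elements. -/
def mulAutToPermNeOne (V : Type*) [Group V] : MulAut V →* Equiv.Perm {v : V // v ≠ 1} where
  toFun f := f.toEquiv.subtypeEquiv fun _ => (EmbeddingLike.map_ne_one_iff (f := f)).symm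
  map_one' := rfl
  map_mul' _ _ := rfl

theorem mulAutToPermNeOne_injective (V : Type*) [Group V] :
    Function.Injective (mulAutToPermNeOne V) := by
  intro f g h
  ext v
  obtain rfl | hv := eq_or_ne v 1
  · rw [map_one, map_one]
  · exact congrArg Subtype.val (DFunLike.congr_fun h ⟨v, hv⟩)

theorem derivedSeries_mulAut_two_eq_bot {V : Type*} [Group V] [Finite V] (hV : Nat.card V ≤ 4) :
    derivedSeries (MulAut V) 2 = ⊥ := by
  refine derivedSeries_eq_bot_of_injective (mulAutToPermNeOne_injective V)
    (derivedSeries_perm_two_eq_bot ?_)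
  have : Nat.card {v : V // v ≠ 1} < Nat.card V := Finite.card_subtype_lt (not_not_intro rfl)
  lia

theorem commutator_derivedSeries_two_le_center {B : Subgroup G} [B.Normal]
    [(center G).IsFiniteRelIndex B] (hB : (center G).relIndex B ≤ 4) :
    ⁅derivedSeries G 2, B⁆ ≤ center G := by
  let π := QuotientGroup.mk' (center G)
  let V := B.map π
  have : V.Normal := Normal.map ‹_› π (QuotientGroup.mk'_surjective _)
  let conjV : G →* MulAut V := MulAut.conjNormal.comp π
  have card_V : Nat.card V = (center G).relIndex B := by
    rw [← relIndex_ker, QuotientGroup.ker_mk']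
  have : Finite V := Nat.finite_of_card_ne_zero (card_V ▸ relIndex_ne_zero)
  have le_ker : derivedSeries G 2 ≤ conjV.ker := by
    rw [← (derivedSeries G 2).map_eq_bot_iff, ← le_bot_iff,
      ← derivedSeries_mulAut_two_eq_bot (card_V.trans_le hB)]
    exact map_derivedSeries_le_derivedSeries conjV 2
  rw [commutator_le]
  intro g hg b hb
  let v : V := ⟨π b, mem_map_of_mem π hb⟩
  have conj_eq : π g * π b * (π g)⁻¹ = π b :=
    congrArg Subtype.val (DFunLike.congr_fun (MonoidHom.mem_ker.mp (le_ker hg)) v)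
  rw [← QuotientGroup.ker_mk' (center G), MonoidHom.mem_ker, map_commutatorElement,
    commutatorElement_def]
  exact mul_inv_eq_one.mpr conj_eq

theorem derivedSeries_four_eq_bot_of_relIndex_center_le_four {B : Subgroup G} [B.Normal]
    [(center G).IsFiniteRelIndex B] (h₄ : (center G).relIndex B ≤ 4)
    (hB : centralizer B ≤ center G) : derivedSeries G 4 = ⊥ := by
  have le_center := commutator_derivedSeries_two_le_center h₄
  have commutator_eq_bot : ⁅derivedSeries G 3, B⁆ = ⊥ := by
    refine commutator_commutator_eq_bot_of_rotate ?_ ?_ <;>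
      rw [commutator_eq_bot_iff_le_centralizer]
    · exact le_center.trans (center_le_centralizer _)
    · exact (commutator_comm_le _ _).trans (le_center.trans (center_le_centralizer _))
  exact derivedSeries_succ_eq_bot_of_le
    ((commutator_eq_bot_iff_le_centralizer.mp commutator_eq_bot).trans hB)

theorem inv_mul_mem_centralizer_of_commutatorElement_eq {g h x : G} (hgh : ⁅g, x⁆ = ⁅h, x⁆) :
    g⁻¹ * h ∈ centralizer {x} := by
  have conj_eq : g * x * g⁻¹ = h * x * h⁻¹ := mul_right_cancel (b := x⁻¹) hgh
  rw [mem_centralizer_singleton_iff]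
  calc g⁻¹ * h * x = g⁻¹ * (h * x * h⁻¹) * h := by group
    _ = x * (g⁻¹ * h) := by rw [← conj_eq]; group

theorem relIndex_centralizer_singleton_ne_zero_and_le {B : Subgroup G} [Finite ↥⁅B, B⁆] {x : G}
    (hx : x ∈ B) :
    (centralizer {x}).relIndex B ≠ 0 ∧ (centralizer {x}).relIndex B ≤ Nat.card ↥⁅B, B⁆ := by
  let f (q : B ⧸ (centralizer {x}).subgroupOf B) : ↥⁅B, B⁆ :=
    ⟨⁅(q.out : G), x⁆, commutator_mem_commutator q.out.2 hx⟩
  have f_injective : Function.Injective f := by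
    intro q₁ q₂ h
    rw [← q₁.out_eq', ← q₂.out_eq', QuotientGroup.eq, mem_subgroupOf]
    exact inv_mul_mem_centralizer_of_commutatorElement_eq (congrArg Subtype.val h)
  have := Finite.of_injective f f_injective
  exact ⟨Nat.card_pos.ne', Nat.card_le_card_of_injective f f_injective⟩

theorem derivedSeries_four_eq_bot_of_card_commutator_le_two {B : Subgroup G} [B.Normal]
    [Finite ↥⁅B, B⁆] (hB : Nat.card ↥⁅B, B⁆ ≤ 2) {x y : G} (hx : x ∈ B) (hy : y ∈ B)
    (hxy : centralizer {x, y} ≤ center G) : derivedSeries G 4 = ⊥ := by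
  obtain ⟨hx₀, hx₂⟩ := relIndex_centralizer_singleton_ne_zero_and_le hx
  obtain ⟨hy₀, hy₂⟩ := relIndex_centralizer_singleton_ne_zero_and_le hy
  have ne_zero : (centralizer {x, y}).relIndex B ≠ 0 := by
    rw [centralizer_eq_iInf, iInf_pair]
    exact relIndex_inf_ne_zero hx₀ hy₀
  have le_four : (centralizer {x, y}).relIndex B ≤ 2 * 2 := by
    rw [centralizer_eq_iInf, iInf_pair]
    exact relIndex_inf_le.trans (Nat.mul_le_mul (hx₂.trans hB) (hy₂.trans hB))
  have : (center G).IsFiniteRelIndex B := ⟨mt (relIndex_eq_zero_of_le_left hxy) ne_zero⟩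
  exact derivedSeries_four_eq_bot_of_relIndex_center_le_four
    ((relIndex_le_of_le_left hxy ne_zero).trans le_four)
    ((centralizer_le (Set.pair_subset hx hy)).trans hxy)

end DerivedSeries

section Matrices

open Module
open scoped commutatorElement

variable {F : Type*} [Field F]

theorem exists_eq_smul_one_add_smul_of_commute {V : Type*} [AddCommGroup V] [Module F V]
    (hV : finrank F V = 2) {f g : End F V} (hf : ∀ c : F, f ≠ c • 1) (hfg : Commute f g) :
    ∃ r s : F, g = r • 1 + s • f := by
  obtain ⟨v, hv⟩ : ∃ v, LinearIndependent F ![v, f v] := by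
    by_contra! h
    obtain ⟨c, hc⟩ := LinearMap.exists_eq_smul_id_of_forall_notLinearIndependent h
    exact hf c hc
  have span_eq_top : Submodule.span F {v, f v} = ⊤ := by
    rw [← Matrix.range_cons_cons_empty v (f v) ![]]
    exact hv.span_eq_top_of_card_eq_finrank (by simp [hV])
  obtain ⟨r, s, hgv⟩ : ∃ r s : F, r • v + s • f v = g v :=
    Submodule.mem_span_pair.mp (span_eq_top ▸ Submodule.mem_top)
  refine ⟨r, s, LinearMap.ext_on span_eq_top ?_⟩
  have hgfv : g (f v) = f (g v) := (LinearMap.congr_fun hfg v).symm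
  rintro _ (rfl | rfl)
  · simp [hgv]
  · simp [hgfv, ← hgv]

theorem exists_val_eq_smul_one_add_smul_of_commute {a x : GL (Fin 2) F}
    (ha : a ∉ Subgroup.center (GL (Fin 2) F)) (hx : Commute a x) :
    ∃ r s : F, x.val = r • 1 + s • a.val := by
  rw [GeneralLinearGroup.mem_center_iff_val_mem_range_scalar] at ha
  obtain ⟨r, s, h⟩ := exists_eq_smul_one_add_smul_of_commute (finrank_fin_fun F)
    (f := toLinAlgEquiv' a.val) (g := toLinAlgEquiv' x.val)
    (fun c hc => ha ⟨c, toLinAlgEquiv'.injective (by simp [hc, ← smul_one_eq_diagonal])⟩)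
    (hx.units_val.map toLinAlgEquiv')
  exact ⟨r, s, toLinAlgEquiv'.injective (by simpa using h)⟩

theorem commute_of_commute_of_notMem_center {a x y : GL (Fin 2) F}
    (ha : a ∉ Subgroup.center (GL (Fin 2) F)) (hx : Commute a x) (hy : Commute a y) :
    Commute x y := by
  obtain ⟨r, s, hxrs⟩ := exists_val_eq_smul_one_add_smul_of_commute ha hx
  rw [← Commute.units_val_iff, hxrs]
  exact ((Commute.one_left _).smul_left r).add_left (hy.units_val.smul_left s)

theorem det_fin_two_smul_one_add_smul {R : Type*} [CommRing R] (A : Matrix (Fin 2) (Fin 2) R)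
    (r s : R) : (r • 1 + s • A).det = r ^ 2 + r * s * A.trace + s ^ 2 * A.det := by
  simp only [det_fin_two, trace_fin_two, Matrix.add_apply, Matrix.smul_apply, smul_eq_mul,
    one_apply_eq, one_apply_ne zero_ne_one, one_apply_ne one_ne_zero]
  ring

/-- Each pair of hypotheses says that `X ↦ r + sX` preserves the multiset of roots of
`X² - tX + d`; two affine maps that permute the same two points, or have a common fixed point,
commute. -/
theorem affine_comm_of_trace_eq_of_det_eq {r s r' s' t d : F}
    (ht : 2 * r + s * t = t) (hd : r ^ 2 + r * s * t + s ^ 2 * d = d)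
    (ht' : 2 * r' + s' * t = t) (hd' : r' ^ 2 + r' * s' * t + s' ^ 2 * d = d) :
    r + s * r' = r' + s' * r := by
  by_contra hne
  have hw : r * (1 - s') - r' * (1 - s) ≠ 0 := fun h => hne (by linear_combination h)
  have two_eq_zero : (2 : F) = 0 := by
    refine (mul_eq_zero.mp ?_).resolve_right hw
    linear_combination (1 - s') * ht - (1 - s) * ht'
  have t_eq_zero : t = 0 := by
    refine (mul_eq_zero.mp ?_).resolve_right hw
    linear_combination r' * ht - r * ht'
  refine pow_ne_zero 2 hw ?_
  subst t_eq_zero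
  linear_combination (1 - s') ^ 2 * hd + (1 - s) ^ 2 * hd' +
    (1 - s) * (1 - s') * (d * (1 - s * s') - r * r') * two_eq_zero

theorem exists_conj_eq_smul_one_add_smul_of_commute {a g : GL (Fin 2) F}
    (ha : a ∉ Subgroup.center (GL (Fin 2) F)) (hg : Commute a (g⁻¹ * a * g)) :
    ∃ r s : F, (g⁻¹ * a * g).val = r • 1 + s • a.val ∧
      2 * r + s * a.val.trace = a.val.trace ∧
      r ^ 2 + r * s * a.val.trace + s ^ 2 * a.val.det = a.val.det := by
  obtain ⟨r, s, h⟩ := exists_val_eq_smul_one_add_smul_of_commute ha hg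
  refine ⟨r, s, h, ?_, ?_⟩
  · simpa [mul_comm] using (congrArg trace h).symm.trans (trace_units_conj' g a.val)
  · rw [← det_fin_two_smul_one_add_smul, ← h]
    exact det_units_conj' g a.val

theorem commute_commutatorElement_of_commute_conj {a g k : GL (Fin 2) F}
    (ha : a ∉ Subgroup.center (GL (Fin 2) F))
    (hg : Commute a (g⁻¹ * a * g)) (hk : Commute a (k⁻¹ * a * k)) : Commute a ⁅g, k⁆ := by
  obtain ⟨r, s, hgrs, ht, hd⟩ := exists_conj_eq_smul_one_add_smul_of_commute ha hg
  obtain ⟨r', s', hkrs, ht', hd'⟩ := exists_conj_eq_smul_one_add_smul_of_commute ha hk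
  have conj_affine (u b : GL (Fin 2) F) (p q : F) (hb : b.val = p • 1 + q • a.val) :
      (u⁻¹ * b * u).val = p • 1 + q • (u⁻¹ * a * u).val := by
    simp [hb, mul_add, add_mul]
  have conj_comm : k⁻¹ * (g⁻¹ * a * g) * k = g⁻¹ * (k⁻¹ * a * k) * g := by
    ext1
    rw [conj_affine k _ r s hgrs, conj_affine g _ r' s' hkrs, hgrs, hkrs]
    calc r • 1 + s • (r' • 1 + s' • a.val) = (r + s * r') • 1 + (s * s') • a.val := by module
      _ = (r' + s' * r) • 1 + (s * s') • a.val := by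
        rw [affine_comm_of_trace_eq_of_det_eq ht hd ht' hd']
      _ = r' • 1 + s' • (r • 1 + s • a.val) := by module
  calc a * ⁅g, k⁆ = g * k * (k⁻¹ * (g⁻¹ * a * g) * k) * g⁻¹ * k⁻¹ := by
        rw [commutatorElement_def]; group
    _ = ⁅g, k⁆ * a := by rw [conj_comm, commutatorElement_def]; group

theorem eq_one_or_eq_neg_one_of_mem_center_of_det_eq_one {z : GL (Fin 2) F}
    (hz : z ∈ Subgroup.center (GL (Fin 2) F)) (hdet : z.det = 1) : z = 1 ∨ z = -1 := by
  obtain ⟨c, hc⟩ := GeneralLinearGroup.mem_center_iff_val_mem_range_scalar.mp hz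
  have eq_one_or_neg_one : c = 1 ∨ c = -1 := by
    simpa [← hc] using congrArg Units.val hdet
  refine eq_one_or_neg_one.imp ?_ ?_ <;> rintro rfl <;> ext1 <;>
    simp [← hc, ← smul_one_eq_diagonal]

end Matrices

section FaithfulRepresentation

open Subgroup
open scoped commutatorElement

variable {G F : Type*} [Group G] [Field F] {ρ : G →* GL (Fin 2) F}

theorem centralizer_singleton_isMulCommutative (hρ : Function.Injective ρ) {a : G}
    (ha : ρ a ∉ center (GL (Fin 2) F)) : IsMulCommutative (centralizer {a}) := by
  rw [← le_centralizer_iff_isMulCommutative]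
  intro x hx y hy
  have commute_of_mem {z : G} (hz : z ∈ centralizer {a}) : Commute (ρ a) (ρ z) :=
    Commute.map (mem_centralizer_singleton_iff.mp hz).symm ρ
  exact Commute.of_map hρ
    (commute_of_commute_of_notMem_center ha (commute_of_mem hy) (commute_of_mem hx))

theorem derivedSeries_two_eq_bot_of_notMem_center (hρ : Function.Injective ρ) {N : Subgroup G}
    [N.Normal] [IsMulCommutative N] {a : G} (haN : a ∈ N) (ha : ρ a ∉ center (GL (Fin 2) F)) :
    derivedSeries G 2 = ⊥ := by
  have := centralizer_singleton_isMulCommutative hρ ha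
  have commute_conj (g : G) : Commute (ρ a) ((ρ g)⁻¹ * ρ a * ρ g) := by
    simpa using Commute.map (le_centralizer N (Normal.conj_mem' ‹_› a haN g) a haN) ρ
  refine derivedSeries_succ_eq_bot_of_le (K := centralizer {a}) ?_
  rw [derivedSeries_one, commutator_def, commutator_le]
  intro g _ k _
  refine mem_centralizer_singleton_iff.mpr (Commute.of_map hρ ?_).symm
  rw [map_commutatorElement]
  exact commute_commutatorElement_of_commute_conj ha (commute_conj g) (commute_conj k)

theorem centralizer_pair_le_center (hρ : Function.Injective ρ) {x y : G} (hxy : ¬Commute x y) :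
    centralizer {x, y} ≤ center G := by
  intro z hz
  have hx : Commute x z := hz x (Set.mem_insert x {y})
  have hy : Commute y z := hz y (Set.mem_insert_of_mem x rfl)
  have map_mem_center : ρ z ∈ center (GL (Fin 2) F) := by
    by_contra hρz
    exact hxy (.of_map hρ
      (commute_of_commute_of_notMem_center hρz (hx.symm.map ρ) (hy.symm.map ρ)))
  exact mem_center_iff.mpr fun g => Commute.of_map hρ (mem_center_iff.mp map_mem_center (ρ g))

theorem finite_and_card_le_two_of_le_comap_center (hρ : Function.Injective ρ) {A : Subgroup G}
    (hcenter : A ≤ (center (GL (Fin 2) F)).comap ρ)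
    (hdet : A ≤ (GeneralLinearGroup.det.comp ρ).ker) : Finite A ∧ Nat.card A ≤ 2 := by
  have image_subset : ρ '' A ⊆ {1, -1} := by
    rintro _ ⟨a, ha, rfl⟩
    exact eq_one_or_eq_neg_one_of_mem_center_of_det_eq_one (hcenter ha) (hdet ha)
  refine ⟨((Set.toFinite _).subset image_subset).of_finite_image hρ.injOn, ?_⟩
  calc Nat.card A = (ρ '' A).ncard := (Set.ncard_image_of_injective _ hρ).symm
    _ ≤ ({1, -1} : Set (GL (Fin 2) F)).ncard := Set.ncard_le_ncard image_subset
    _ ≤ 2 := by simpa using Set.ncard_insert_le (1 : GL (Fin 2) F) {-1}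

end FaithfulRepresentation

theorem solvable_subgroup_GL2_derived_four_general {G F : Type*} [Group G] [Group.IsSolvable G]
    [Field F] {ρ : G →* GL (Fin 2) F} (hρ : Function.Injective ρ) : derivedSeries G 4 = ⊥ := by
  by_contra h₄
  have ne_bot_of_le {k : ℕ} (hk : k ≤ 4) : derivedSeries G k ≠ ⊥ := fun h =>
    h₄ (le_bot_iff.mp (h ▸ derivedSeries_antitone G hk))
  obtain ⟨n, hn, commutator_ne_bot, succ_eq_bot⟩ :=
    exists_derivedSeries_ne_bot_and_succ_eq_bot (ne_bot_of_le (k := 1) (by norm_num))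
  obtain ⟨m, rfl⟩ := Nat.exists_eq_add_of_le' hn
  have : IsMulCommutative (derivedSeries G (m + 1)) :=
    Subgroup.commutator_self_eq_bot_iff.mp succ_eq_bot
  have le_center : derivedSeries G (m + 1) ≤ (Subgroup.center (GL (Fin 2) F)).comap ρ := by
    intro a ha
    by_contra hρa
    exact ne_bot_of_le (k := 2) (by norm_num) (derivedSeries_two_eq_bot_of_notMem_center hρ ha hρa)
  have le_ker_det : derivedSeries G (m + 1) ≤ (GeneralLinearGroup.det.comp ρ).ker :=
    (derivedSeries_antitone G hn).trans
      ((derivedSeries_one G).trans_le (Abelianization.commutator_subset_ker _))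
  obtain ⟨(_ : Finite ↥⁅derivedSeries G m, derivedSeries G m⁆), card_le_two⟩ :=
    finite_and_card_le_two_of_le_comap_center hρ le_center le_ker_det
  obtain ⟨x, hx, y, hy, hxy⟩ :
      ∃ x ∈ derivedSeries G m, ∃ y ∈ derivedSeries G m, ¬Commute x y := by
    by_contra! h
    refine commutator_ne_bot (Subgroup.commutator_eq_bot_iff_le_centralizer.mpr ?_)
    exact fun x hx y hy => h y hy x hx
  exact h₄ (derivedSeries_four_eq_bot_of_card_commutator_le_two card_le_two hx hy
    (centralizer_pair_le_center hρ hxy))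

/-- Let `M ⊆ GL₂(ℤ/ℓℤ)` be a solvable subgroup for a prime `ℓ`. Then the
fourth iterated commutator subgroup `M⁽⁴⁾` is trivial. -/
theorem solvable_subgroup_GL2_derived_four
    (ℓ : ℕ) [Fact ℓ.Prime]
    (M : Subgroup (GL (Fin 2) (ZMod ℓ)))
    (hM : IsSolvable ↥M) :
    derivedSeries ↥M 4 = ⊥ :=
  have : Group.IsSolvable M := hM
  solvable_subgroup_GL2_derived_four_general M.subtype_injective
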